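/- arXiv:1401.7923 — 2 statements merged into one kernel-verified Lean document; each statement's English description precedes it below -/
import Mathlib

section
/- Let G be a finite simple graph, z > 0, v ∈ V, and let B ∈ {0,1}^{∂v} satisfy Σ_{e ∋ v} B_e ≤ 1. Then μ_{∂v}(B) / Π_{e ∋ v} μ_e(B_e) = 1 − Σ_{∅ ≠ S ⊆ ∂v} (−1)^{|S|} (|S| − 1) Π_{e ∈ S} (B_e − x_e(z))/(1 − x_e(z)), where the sum is over nonempty subsets S of the set of edges incident to v. -/
/-!
The fixed-point structure is used only through `0 < x e < 1`. Write `y e = (B e - x e) / (1 - x e)`.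
The empty set contributes `-1` to the sum over all `S ⊆ ∂v`, so the right-hand side equals
`-∑_{S ⊆ ∂v} (-1)^|S| (|S| - 1) ∏_{e ∈ S} y e`. This is the value at `t = 1` of
`(1 - t d/dt) ∏_e (1 - t y e)`, i.e. `∏_e (1 - y e) + ∑_e y e ∏_{f ≠ e} (1 - y f)`
(`sum_powerset_card_sub_one`). Here `1 - y e = (1 - B e) / (1 - x e)`. If `B` vanishes at `v`, every
summand is a multiple of `∏_e (1 - x e)⁻¹` and the total is `(1 - ∑ x) ∏_e (1 - x e)⁻¹`. If `B` has
one edge `a` at `v`, then `y a = 1`, so only the summand `e = a` survives and gives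
`∏_{e ≠ a} (1 - x e)⁻¹`.
-/

open Finset Filter Topology

variable {V : Type*} [Fintype V] [DecidableEq V]

namespace SimpleGraph

variable (G : SimpleGraph V) [DecidableRel G.Adj]

/-- The type of directed edges of `G`. -/
abbrev DEdge : Type _ := {p : V × V // G.Adj p.1 p.2}

/-- Reversal of a directed edge. -/
def rev (e : G.DEdge) : G.DEdge := ⟨(e.1.2, e.1.1), e.2.symm⟩

/-- Sum of the messages `X (w → u)` over `w ∈ ∂u \ {v}`. -/
def exclSum {M : Type*} [AddCommMonoid M] (X : G.DEdge → M) (u v : V) : M :=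
  ∑ w ∈ ((G.neighborFinset u).erase v).attach,
    X ⟨(w.1, u), ((mem_neighborFinset _ _ _).mp (Finset.mem_of_mem_erase w.2)).symm⟩

/-- The BP map `ℛ_G`: `(ℛ_G X)_{u→v} = 1 / (1 + ∑_{w ∈ ∂u∖v} X_{w→u})`. -/
noncomputable def bpR (X : G.DEdge → ℝ) (e : G.DEdge) : ℝ :=
  1 / (1 + G.exclSum X e.1.1 e.1.2)

/-- `Y` is a positive fixed point of `X = z ⬝ ℛ_G X`. -/
def IsBPFixed (z : ℝ) (Y : G.DEdge → ℝ) : Prop :=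
  (∀ e, 0 < Y e) ∧ ∀ e, Y e = z * G.bpR Y e

/-- Sum of messages pointing into `v`. -/
def inFlow {M : Type*} [AddCommMonoid M] (X : G.DEdge → M) (v : V) : M :=
  ∑ u ∈ (G.neighborFinset v).attach,
    X ⟨(u.1, v), ((mem_neighborFinset _ _ _).mp u.2).symm⟩

/-- Sum of messages pointing out of `v`. -/
def outFlow {M : Type*} [AddCommMonoid M] (X : G.DEdge → M) (v : V) : M :=
  ∑ u ∈ (G.neighborFinset v).attach,
    X ⟨(v, u.1), (mem_neighborFinset _ _ _).mp u.2⟩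

/-- The map `𝒫_G` on `{0,1}`-valued messages. -/
def bpP (I : G.DEdge → ℕ) (e : G.DEdge) : ℕ :=
  if G.exclSum I e.1.1 e.1.2 = 0 then 1 else 0

/-- `F_v(I) = min(1, Σ_{u ∈ ∂v} I_{u→v}) + max(0, 1 − Σ_{u ∈ ∂v} I_{v→u})`. -/
def Fv (I : G.DEdge → ℕ) (v : V) : ℕ :=
  min 1 (G.inFlow I v) + (1 - G.outFlow I v)

/-- The value `x_e(z)` built from the messages. -/
noncomputable def xval (Y : G.DEdge → ℝ) (z : ℝ) (e : G.DEdge) : ℝ :=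
  Y e * Y (G.rev e) / (z + Y e * Y (G.rev e))

/-- Weight (number of present edges) of a `{0,1}`-vector on edges. -/
def mWeight (B : G.edgeSet → Bool) : ℕ := ∑ e : G.edgeSet, if B e then 1 else 0

/-- `B` is (the indicator vector of) a matching. -/
def IsMatchingVec (B : G.edgeSet → Bool) : Prop :=
  ∀ v : V, (∑ e : G.edgeSet, if B e ∧ v ∈ (e : Sym2 V) then 1 else 0) ≤ 1

instance (B : G.edgeSet → Bool) : Decidable (G.IsMatchingVec B) := by
  unfold IsMatchingVec; infer_instance

/-- Partition function of the monomer-dimer model. -/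
noncomputable def gibbsP (z : ℝ) : ℝ :=
  ∑ B : G.edgeSet → Bool, if G.IsMatchingVec B then z ^ G.mWeight B else 0

/-- Edges incident to `v`. -/
def incE (v : V) : Finset G.edgeSet :=
  Finset.univ.filter (fun e => v ∈ (e : Sym2 V))

end SimpleGraph

/-- Both sides are the value at `t = 1` of `(t d/dt - 1) ∏ (1 - t y e)`: on the left the product is
expanded over subsets, on the right it is differentiated factor by factor. -/
lemma sum_powerset_card_sub_one {ι : Type*} [DecidableEq ι] (s : Finset ι) (y : ι → ℝ) :
    ∑ S ∈ s.powerset, (-1 : ℝ) ^ S.card * ((S.card : ℝ) - 1) * ∏ e ∈ S, y e =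
      -∏ e ∈ s, (1 - y e) - ∑ e ∈ s, y e * ∏ f ∈ s.erase e, (1 - y f) := by
  induction s using Finset.induction_on with
  | empty => simp
  | insert a s ha ih =>
    have hexp : ∑ S ∈ s.powerset, (-1 : ℝ) ^ S.card * ∏ e ∈ S, y e = ∏ e ∈ s, (1 - y e) := by
      have h := Finset.prod_one_add (f := fun e => -y e) s
      simp only [Finset.prod_neg, ← sub_eq_add_neg] at h
      exact h.symm
    -- Adjoining `a` to `S` multiplies the weight by `-y a` and raises `|S| - 1` by one.
    have hins : ∑ S ∈ s.powerset, (-1 : ℝ) ^ (insert a S).card * (((insert a S).card : ℝ) - 1) *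
          ∏ e ∈ insert a S, y e =
        -y a * (∑ S ∈ s.powerset, (-1 : ℝ) ^ S.card * ((S.card : ℝ) - 1) * ∏ e ∈ S, y e +
          ∑ S ∈ s.powerset, (-1 : ℝ) ^ S.card * ∏ e ∈ S, y e) := by
      rw [← Finset.sum_add_distrib, Finset.mul_sum]
      refine Finset.sum_congr rfl fun S hS => ?_
      have haS : a ∉ S := fun h => ha (Finset.mem_powerset.mp hS h)
      rw [Finset.card_insert_of_notMem haS, Finset.prod_insert haS]
      push_cast
      ring
    have herase : ∑ e ∈ s, y e * ∏ f ∈ (insert a s).erase e, (1 - y f) =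
        (1 - y a) * ∑ e ∈ s, y e * ∏ f ∈ s.erase e, (1 - y f) := by
      rw [Finset.mul_sum]
      refine Finset.sum_congr rfl fun e he => ?_
      have hne : a ≠ e := fun h => ha (h ▸ he)
      rw [Finset.erase_insert_of_ne hne,
        Finset.prod_insert (fun h => ha (Finset.mem_of_mem_erase h))]
      ring
    rw [Finset.sum_powerset_insert ha, hins, hexp, ih, Finset.prod_insert ha,
      Finset.sum_insert ha, herase, Finset.erase_insert ha]
    ring

/-- The local identity for a finite index set `s` in place of the edges at `v`; only
`0 < x e < 1` matters. -/
lemma local_identity_finset {ι : Type*} [DecidableEq ι] (s : Finset ι) (x : ι → ℝ)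
    (hx0 : ∀ e ∈ s, 0 < x e) (hx1 : ∀ e ∈ s, x e < 1) (B : ι → Bool)
    (hB : (∑ e ∈ s, if B e then 1 else 0) ≤ 1) :
    ((1 - ∑ e ∈ s, x e) ^ ((1 : ℕ) - ∑ e ∈ s, if B e then 1 else 0) *
        ∏ e ∈ s.filter (fun e => B e), x e) /
      (∏ e ∈ s, if B e then x e else 1 - x e) =
    1 - ∑ S ∈ s.powerset.erase ∅,
      (-1 : ℝ) ^ S.card * ((S.card : ℝ) - 1) *
        ∏ e ∈ S, ((if B e then 1 else 0) - x e) / (1 - x e) := by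
  have hne : ∀ e ∈ s, 1 - x e ≠ 0 := fun e he => (sub_pos.mpr (hx1 e he)).ne'
  rw [Finset.sum_erase_eq_sub (Finset.empty_mem_powerset s), sum_powerset_card_sub_one]
  by_cases hall : ∀ e ∈ s, B e = false
  · have hcard : (∑ e ∈ s, if B e then 1 else 0) = 0 :=
      Finset.sum_eq_zero fun e he => by simp [hall e he]
    have hfilter : s.filter (fun e => B e) = ∅ :=
      Finset.filter_eq_empty_iff.mpr fun e he => by simp [hall e he]
    have hden : (∏ e ∈ s, if B e then x e else 1 - x e) = ∏ e ∈ s, (1 - x e) :=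
      Finset.prod_congr rfl fun e he => by simp [hall e he]
    have hone : ∀ e ∈ s, 1 - ((if B e then 1 else 0) - x e) / (1 - x e) = (1 - x e)⁻¹ := by
      intro e he
      have := hne e he
      simp only [hall e he, Bool.false_eq_true, if_false]
      field_simp
      ring
    have hsum : ∑ e ∈ s, ((if B e then 1 else 0) - x e) / (1 - x e) *
          ∏ f ∈ s.erase e, (1 - ((if B f then 1 else 0) - x f) / (1 - x f)) =
        -((∑ e ∈ s, x e) * ∏ e ∈ s, (1 - x e)⁻¹) := by
      rw [Finset.sum_mul, ← Finset.sum_neg_distrib]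
      refine Finset.sum_congr rfl fun e he => ?_
      rw [Finset.prod_congr rfl fun f hf => hone f (Finset.mem_of_mem_erase hf),
        ← Finset.mul_prod_erase s _ he]
      simp only [hall e he, Bool.false_eq_true, if_false]
      ring
    rw [hcard, hfilter, hden, hsum, Finset.prod_congr rfl hone, Finset.prod_inv_distrib]
    simp only [Finset.prod_empty, Finset.card_empty]
    push_cast
    ring
  · push Not at hall
    obtain ⟨a, ha, hBa⟩ := hall
    replace hBa : B a = true := by simpa using hBa
    have hrest : ∀ e ∈ s.erase a, B e = false := by
      have hle : (∑ e ∈ s.erase a, if B e then 1 else 0) = 0 := by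
        rw [← Finset.add_sum_erase s _ ha] at hB
        simp only [hBa, if_true] at hB
        omega
      intro e he
      simpa using Finset.sum_eq_zero_iff.mp hle e he
    have hcard : (∑ e ∈ s, if B e then 1 else 0) = 1 := by
      rw [← Finset.add_sum_erase s _ ha, Finset.sum_eq_zero fun e he => by simp [hrest e he]]
      simp [hBa]
    have hfilter : s.filter (fun e => B e) = {a} := by
      ext e
      simp only [Finset.mem_filter, Finset.mem_singleton]
      refine ⟨fun h => ?_, fun h => h ▸ ⟨ha, hBa⟩⟩
      by_contra hea
      simpa [hrest e (Finset.mem_erase.mpr ⟨hea, h.1⟩)] using h.2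
    have hden : (∏ e ∈ s, if B e then x e else 1 - x e) =
        x a * ∏ e ∈ s.erase a, (1 - x e) := by
      rw [← Finset.mul_prod_erase s _ ha]
      simp only [hBa, if_true]
      congr 1
      exact Finset.prod_congr rfl fun e he => by simp [hrest e he]
    have hya : ((if B a then 1 else 0) - x a) / (1 - x a) = 1 := by
      simp only [hBa, if_true]
      exact div_self (hne a ha)
    have hone : ∀ e ∈ s.erase a,
        1 - ((if B e then 1 else 0) - x e) / (1 - x e) = (1 - x e)⁻¹ := by
      intro e he
      have := hne e (Finset.mem_of_mem_erase he)
      simp only [hrest e he, Bool.false_eq_true, if_false]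
      field_simp
      ring
    have hprod : ∏ e ∈ s, (1 - ((if B e then 1 else 0) - x e) / (1 - x e)) = 0 :=
      Finset.prod_eq_zero ha (by rw [hya, sub_self])
    have hsum : ∑ e ∈ s, ((if B e then 1 else 0) - x e) / (1 - x e) *
          ∏ f ∈ s.erase e, (1 - ((if B f then 1 else 0) - x f) / (1 - x f)) =
        ∏ e ∈ s.erase a, (1 - x e)⁻¹ := by
      -- For `e ≠ a` the product over `s.erase e` contains the vanishing factor at `a`.
      rw [Finset.sum_eq_single_of_mem a ha fun e _ hea => by
        rw [Finset.prod_eq_zero (Finset.mem_erase.mpr ⟨hea.symm, ha⟩) (by rw [hya, sub_self]),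
          mul_zero]]
      rw [hya, one_mul, Finset.prod_congr rfl hone]
    rw [hcard, hfilter, hden, hprod, hsum, Finset.prod_inv_distrib]
    have hxa := (hx0 a ha).ne'
    simp only [Finset.prod_singleton, Finset.prod_empty, Finset.card_empty, Nat.sub_self, pow_zero,
      one_mul]
    rw [div_mul_eq_div_div, div_self hxa]
    push_cast
    ring

/-- Local identity: `μ_{∂v}(B)/Π_{e ∋ v} μ_e(B_e) = 1 − Σ_{∅≠S⊆∂v} (−1)^{|S|}(|S|−1)
Π_{e∈S} (B_e − x_e)/(1 − x_e)`. -/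
theorem labp_local_loop_identity (G : SimpleGraph V) [DecidableRel G.Adj]
    (z : ℝ) (hz : 0 < z) (Y : G.DEdge → ℝ) (hY : G.IsBPFixed z Y)
    (x : G.edgeSet → ℝ)
    (hx : ∀ u v (h : G.Adj u v), x ⟨s(u, v), G.mem_edgeSet.mpr h⟩ =
      Y ⟨(u, v), h⟩ * Y ⟨(v, u), h.symm⟩ / (z + Y ⟨(u, v), h⟩ * Y ⟨(v, u), h.symm⟩))
    (v : V) (B : G.edgeSet → Bool)
    (hB : (∑ e ∈ G.incE v, if B e then 1 else 0) ≤ 1) :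
    ((1 - ∑ e ∈ G.incE v, x e) ^ ((1 : ℕ) - ∑ e ∈ G.incE v, if B e then 1 else 0) *
        ∏ e ∈ (G.incE v).filter (fun e => B e), x e) /
      (∏ e ∈ G.incE v, if B e then x e else 1 - x e) =
    1 - ∑ S ∈ (G.incE v).powerset.erase ∅,
      (-1 : ℝ) ^ S.card * ((S.card : ℝ) - 1) *
        ∏ e ∈ S, ((if B e then 1 else 0) - x e) / (1 - x e) := by
  have hxe : ∀ e : G.edgeSet, 0 < x e ∧ x e < 1 := by
    rintro ⟨e, he⟩
    induction e using Sym2.ind with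
    | _ u w =>
      have h : G.Adj u w := G.mem_edgeSet.mp he
      have hp := mul_pos (hY.1 ⟨(u, w), h⟩) (hY.1 ⟨(w, u), h.symm⟩)
      rw [hx u w h]
      exact ⟨by positivity, (div_lt_one (by positivity)).mpr (by linarith)⟩
  exact local_identity_finset (G.incE v) x (fun e _ => (hxe e).1) (fun e _ => (hxe e).2) B hB
end

section
/- For any finite simple graph G and z > 0, the Gibbs distribution on matchings admits the reparametrization μ_G^z(B) = (1/Z) · Π_{v∈V} μ_{∂v}(B_{∂v}) / Π_{e∈E} μ_e(B_e) for every matching B, where Z = 1 + Σ_{∅ ≠ F ⊆ E} (−1)^{V(F)} Π_{v : d_F(v) ≥ 1} (d_F(v) − 1) Π_{e ∈ F} x_e(z)/(1 − x_e(z)); only generalized loops F (subsets with d_F(v) ≠ 1 for all v) contribute nonzero terms to this sum, and moreover ln Z = Φ_G(z) − Φ^B(x(z); z). -/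
/-!
The proof rests on two facts. Write `s_v = 1 - ∑_{e ∋ v} x_e`.

The first is local. Putting the missing message back into the BP equation gives
`z + Y_{u→v} Y_{v→u} = Y_{u→v} (1 + ∑_{w ∈ ∂u} Y_{w→u})`; hence `s_u = 1 / (1 + ∑_w Y_{w→u}) > 0`,
and every edge `e = uv` satisfies `x_e (1 - x_e) = z s_u s_v` (`edge_identity`). Consequently the
ratio of vertex to edge marginals of a matching `B` is `C z^{|B|}` with
`C = ∏_v s_v / ∏_e (1 - x_e)` (`vertexMargProd_mul`), and inserting the logarithm of the identity
into the Bethe free entropy gives `Φ^B(x; z) = -ln C` (`bethe_eq`). Everything thus reduces to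
`Z = C P_G(z)`.

The second is a polynomial identity (`loopSum_eq_matchSum`). Since
`(-1)^{V(F)} ∏ (d_F(v) - 1) = ∏_v (1 - d_F(v))`, the quantity `Z ∏_e (1 - x_e)` is the expectation
of `∏_v (1 - d_F(v))` for a random edge set `F` containing each `e` independently with
probability `x_e`. Now `1 - d_F(v) = s_v - ∑_{e ∋ v} ξ_e` with `ξ_e = 1_{e ∈ F} - x_e` independent
and centred. In the expanded product each `ξ_e` occurs at most twice, and a term survives only if
every `ξ_e` occurring in it is chosen by both endpoints, so the expectation is the sum over
matchings `M` of `∏_{e ∈ M} x_e (1 - x_e) ∏_{v ∉ V(M)} s_v`. By the edge identity this equals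
`P_G(z) ∏_v s_v`. The identity is proved by adding edges one at a time, for an arbitrary set `W` of
vertices in place of `V`: both sides obey the same deletion recursion
`f(A ∪ {uv}, W) = f(A, W) + x_{uv} (1 - x_{uv}) f(A, W ∖ {u, v})`.
-/


open Finset Filter Topology

variable {V : Type*} [Fintype V] [DecidableEq V]

namespace SimpleGraph
variable (G : SimpleGraph V) [DecidableRel G.Adj]

/-- The Bethe entropy function `S^B(x)` on edge vectors. -/
noncomputable def SBethe (x : G.edgeSet → ℝ) : ℝ :=
  (1 / 2) * ∑ v : V,
    ((∑ e ∈ G.incE v, (-(x e * Real.log (x e)) + (1 - x e) * Real.log (1 - x e))) -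
      2 * (1 - ∑ e ∈ G.incE v, x e) * Real.log (1 - ∑ e ∈ G.incE v, x e))

/-- Degree of `v` in the edge subset `F`. -/
def degF (F : Finset G.edgeSet) (v : V) : ℕ :=
  (F.filter (fun e => v ∈ (e.1 : Sym2 V))).card

/-- Number of vertices covered by the edge subset `F`. -/
def coveredF (F : Finset G.edgeSet) : ℕ :=
  (Finset.univ.filter (fun v => 1 ≤ G.degF F v)).card

/-- The term of `F` in the loop series. -/
noncomputable def loopTerm (x : G.edgeSet → ℝ) (F : Finset G.edgeSet) : ℝ :=
  (-1 : ℝ) ^ G.coveredF F *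
    (∏ v ∈ Finset.univ.filter (fun v => 1 ≤ G.degF F v), ((G.degF F v : ℝ) - 1)) *
    ∏ e ∈ F, x e / (1 - x e)

/-- The loop series `Z`. -/
noncomputable def loopZ (x : G.edgeSet → ℝ) : ℝ :=
  1 + ∑ F ∈ (Finset.univ : Finset (Finset G.edgeSet)).erase ∅, G.loopTerm x F

/-- The numerator `Π_{v∈V} μ_{∂v}(B_{∂v})`. -/
noncomputable def vertexMargProd (x : G.edgeSet → ℝ) (B : G.edgeSet → Bool) : ℝ :=
  ∏ v : V, ((1 - ∑ e ∈ G.incE v, x e) ^ ((1 : ℕ) - ∑ e ∈ G.incE v, if B e then 1 else 0) *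
    ∏ e ∈ (G.incE v).filter (fun e => B e), x e)

/-- The denominator `Π_{e∈E} μ_e(B_e)`. -/
noncomputable def edgeMargProd (x : G.edgeSet → ℝ) (B : G.edgeSet → Bool) : ℝ :=
  ∏ e : G.edgeSet, if B e then x e else 1 - x e

end SimpleGraph


namespace SimpleGraph
variable (G : SimpleGraph V) [DecidableRel G.Adj]

set_option linter.unusedSectionVars false

/-! ### Loop sums and matching sums, edge by edge -/

/-- `M` is a matching all of whose edges have both endpoints in `W`: every vertex of `W` has
degree at most one in `M`, every other vertex has degree zero. -/
def FitsIn (W : Finset V) (M : Finset G.edgeSet) : Prop :=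
  ∀ v, G.degF M v ≤ if v ∈ W then 1 else 0

instance (W : Finset V) (M : Finset G.edgeSet) : Decidable (G.FitsIn W M) := by
  unfold FitsIn; infer_instance

/-- `s_v - ∑_{e ∈ A, e ∋ v} (1_{e ∈ F} - x_e)` for `F ⊆ A`. If `F` is a random subset of `A`
containing each `e` independently with probability `x_e`, the sum consists of independent centred
variables. -/
noncomputable def fluct (s : V → ℝ) (x : G.edgeSet → ℝ) (A F : Finset G.edgeSet) (v : V) : ℝ :=
  s v + (∑ e ∈ A.filter (fun e => v ∈ (e.1 : Sym2 V)), x e) - G.degF F v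

/-- The expectation of `∏_{v ∈ W} fluct_v` over the random subset `F ⊆ A` containing each `e`
independently with probability `x_e` (as a polynomial, with no restriction on `x`). -/
noncomputable def loopSum (s : V → ℝ) (x : G.edgeSet → ℝ) (A : Finset G.edgeSet)
    (W : Finset V) : ℝ :=
  ∑ F ∈ A.powerset, (∏ v ∈ W, G.fluct s x A F v) *
    ((∏ e ∈ F, x e) * ∏ e ∈ A \ F, (1 - x e))

/-- The matching polynomial of `(W, A)` with weight `x_e (1 - x_e)` on the edges of the matching
and `s_v` on the vertices it leaves uncovered. -/
noncomputable def matchSum (s : V → ℝ) (x : G.edgeSet → ℝ) (A : Finset G.edgeSet)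
    (W : Finset V) : ℝ :=
  ∑ M ∈ A.powerset, if G.FitsIn W M then
    (∏ e ∈ M, x e * (1 - x e)) * ∏ v ∈ W.filter (fun v => G.degF M v = 0), s v else 0

variable {G}

lemma degF_insert {F : Finset G.edgeSet} {e : G.edgeSet} (he : e ∉ F) (v : V) :
    G.degF (insert e F) v = G.degF F v + if v ∈ (e.1 : Sym2 V) then 1 else 0 := by
  unfold degF
  rw [Finset.filter_insert]
  split_ifs with h
  · rw [Finset.card_insert_of_notMem (by simp [he])]
  · simp

/-- Enlarging the ground set by `e` adds the centring term `x_e` at the endpoints of `e`; the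
indicator of `e` is accounted for by `F` alone. -/
lemma fluct_insert (s : V → ℝ) (x : G.edgeSet → ℝ) {A F : Finset G.edgeSet} {e : G.edgeSet}
    (he : e ∉ A) (v : V) :
    G.fluct s x (insert e A) F v =
      G.fluct s x A F v + if v ∈ (e.1 : Sym2 V) then x e else 0 := by
  unfold fluct
  rw [Finset.filter_insert]
  split_ifs with h
  · rw [Finset.sum_insert (by simp [he])]; ring
  · ring

lemma fluct_insert_insert (s : V → ℝ) (x : G.edgeSet → ℝ) {A F : Finset G.edgeSet}
    {e : G.edgeSet} (he : e ∉ A) (heF : e ∉ F) (v : V) :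
    G.fluct s x (insert e A) (insert e F) v =
      G.fluct s x A F v + if v ∈ (e.1 : Sym2 V) then x e - 1 else 0 := by
  have h := fluct_insert s x (F := F) he v
  unfold fluct at h ⊢
  rw [degF_insert heF]
  split_ifs at h ⊢ <;> push_cast <;> linarith

/-- The mean and the variance of a single centred Bernoulli variable, shared by the two endpoints
of an edge: averaging leaves the product unchanged unless both endpoints occur in it, in which case
the variance `x (1 - x)` appears with the remaining factors. -/
lemma bernoulli_avg (W : Finset V) (a : V → ℝ) (x : ℝ) {u v : V} (huv : u ≠ v) :
    x * (∏ w ∈ W, (a w + if w ∈ s(u, v) then x - 1 else 0)) +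
      (1 - x) * (∏ w ∈ W, (a w + if w ∈ s(u, v) then x else 0)) =
    (∏ w ∈ W, a w) +
      if u ∈ W ∧ v ∈ W then x * (1 - x) * ∏ w ∈ (W.erase u).erase v, a w else 0 := by
  have key : ∀ t : ℝ, ∏ w ∈ (W.erase u).erase v, (a w + if w ∈ s(u, v) then t else 0) =
      ∏ w ∈ (W.erase u).erase v, a w := by
    intro t
    refine Finset.prod_congr rfl fun w hw => ?_
    simp only [Finset.mem_erase] at hw
    simp [hw.1, hw.2.1]
  have erase_u : ∀ f : V → ℝ, ∏ w ∈ W, f w = (if u ∈ W then f u else 1) * ∏ w ∈ W.erase u, f w := by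
    intro f
    split_ifs with h
    · rw [Finset.mul_prod_erase _ _ h]
    · rw [Finset.erase_eq_of_notMem h, one_mul]
  have erase_v : ∀ f : V → ℝ, ∏ w ∈ W.erase u, f w =
      (if v ∈ W then f v else 1) * ∏ w ∈ (W.erase u).erase v, f w := by
    intro f
    split_ifs with h
    · rw [Finset.mul_prod_erase _ _ (Finset.mem_erase.2 ⟨huv.symm, h⟩)]
    · rw [Finset.erase_eq_of_notMem (s := W.erase u) (by simp [h]), one_mul]
  simp only [erase_u (fun w => _), erase_v (fun w => _), key]
  by_cases hu : u ∈ W <;> by_cases hv : v ∈ W <;> simp [hu, hv] <;> ring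

lemma loopSum_insert (s : V → ℝ) (x : G.edgeSet → ℝ) {A : Finset G.edgeSet} {e : G.edgeSet}
    (he : e ∉ A) {u v : V} (huv : u ≠ v) (hev : (e.1 : Sym2 V) = s(u, v)) (W : Finset V) :
    G.loopSum s x (insert e A) W = G.loopSum s x A W +
      if u ∈ W ∧ v ∈ W then x e * (1 - x e) * G.loopSum s x A ((W.erase u).erase v) else 0 := by
  have h : ∀ F ∈ A.powerset,
      (∏ w ∈ W, G.fluct s x (insert e A) F w) *
        ((∏ e ∈ F, x e) * ∏ e ∈ insert e A \ F, (1 - x e)) +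
      (∏ w ∈ W, G.fluct s x (insert e A) (insert e F) w) *
        ((∏ e ∈ insert e F, x e) * ∏ e ∈ insert e A \ insert e F, (1 - x e)) =
      (∏ w ∈ W, G.fluct s x A F w) * ((∏ e ∈ F, x e) * ∏ e ∈ A \ F, (1 - x e)) +
      if u ∈ W ∧ v ∈ W then x e * (1 - x e) * ((∏ w ∈ (W.erase u).erase v, G.fluct s x A F w) *
        ((∏ e ∈ F, x e) * ∏ e ∈ A \ F, (1 - x e))) else 0 := by
    intro F hF
    have heF : e ∉ F := fun h => he (Finset.mem_powerset.1 hF h)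
    have h1 : insert e A \ F = insert e (A \ F) := Finset.insert_sdiff_of_notMem _ heF
    have h2 : insert e A \ insert e F = A \ F := by
      ext f; simp only [Finset.mem_sdiff, Finset.mem_insert]
      constructor
      · tauto
      · rintro ⟨hA, hF⟩
        refine ⟨Or.inr hA, ?_⟩
        rintro (rfl | h)
        · exact he hA
        · exact hF h
    rw [h1, h2, Finset.prod_insert heF, Finset.prod_insert (by simp [he])]
    simp only [fluct_insert_insert s x he heF, hev]
    simp only [fluct_insert s x he, hev]
    have := bernoulli_avg W (G.fluct s x A F) (x e) huv
    generalize (∏ w ∈ W, (G.fluct s x A F w + if w ∈ s(u, v) then x e else 0)) = P at *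
    generalize (∏ w ∈ W, (G.fluct s x A F w + if w ∈ s(u, v) then x e - 1 else 0)) = Q at *
    split_ifs at this ⊢ <;>
      linear_combination ((∏ e ∈ F, x e) * ∏ e ∈ A \ F, (1 - x e)) * this
  unfold loopSum
  rw [Finset.sum_powerset_insert he, ← Finset.sum_add_distrib, Finset.sum_congr rfl h,
    Finset.sum_add_distrib]
  split_ifs
  · rw [Finset.mul_sum]
  · simp

lemma fitsIn_insert {M : Finset G.edgeSet} {e : G.edgeSet} (he : e ∉ M) {u v : V}
    (hev : (e.1 : Sym2 V) = s(u, v)) (W : Finset V) :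
    G.FitsIn W (insert e M) ↔ (u ∈ W ∧ v ∈ W) ∧ G.FitsIn ((W.erase u).erase v) M := by
  unfold FitsIn
  simp only [degF_insert he, hev, Sym2.mem_iff, Finset.mem_erase]
  constructor
  · intro h
    have hu := h u
    have hv := h v
    simp only [true_or, or_true, if_true] at hu hv
    refine ⟨⟨by by_contra hW; simp [hW] at hu, by by_contra hW; simp [hW] at hv⟩, fun w => ?_⟩
    have hw := h w
    split_ifs at hw ⊢ <;> first | omega | (exfalso; tauto)
  · rintro ⟨⟨hu, hv⟩, h⟩ w
    have hw := h w
    by_cases h1 : w = u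
    · subst h1; simp at hw; simp [hw, hu]
    by_cases h2 : w = v
    · subst h2; simp at hw; simp [hw, hv]
    · simpa [h1, h2] using hw

lemma matchSum_insert (s : V → ℝ) (x : G.edgeSet → ℝ) {A : Finset G.edgeSet} {e : G.edgeSet}
    (he : e ∉ A) {u v : V} (hev : (e.1 : Sym2 V) = s(u, v)) (W : Finset V) :
    G.matchSum s x (insert e A) W = G.matchSum s x A W +
      if u ∈ W ∧ v ∈ W then x e * (1 - x e) * G.matchSum s x A ((W.erase u).erase v) else 0 := by
  unfold matchSum
  rw [Finset.sum_powerset_insert he]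
  congr 1
  rw [← ite_zero_mul, Finset.mul_sum]
  refine Finset.sum_congr rfl fun M hM => ?_
  have heM : e ∉ M := fun h => he (Finset.mem_powerset.1 hM h)
  have hfil : W.filter (fun w => G.degF (insert e M) w = 0) =
      ((W.erase u).erase v).filter (fun w => G.degF M w = 0) := by
    ext w
    simp only [Finset.mem_filter, degF_insert heM, hev, Sym2.mem_iff, Finset.mem_erase]
    split_ifs with h
    · simp; tauto
    · simp only [add_zero]; tauto
  simp only [fitsIn_insert heM hev, hfil, Finset.prod_insert heM]
  by_cases h1 : u ∈ W ∧ v ∈ W <;> by_cases h2 : G.FitsIn ((W.erase u).erase v) M <;>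
    simp [h1, h2, mul_assoc]

/-- The polynomial identity behind the loop series: in the expectation of a product of
fluctuations only the pairings of endpoints along the edges of a matching survive. -/
lemma loopSum_eq_matchSum (s : V → ℝ) (x : G.edgeSet → ℝ) (A : Finset G.edgeSet) :
    ∀ W : Finset V, G.loopSum s x A W = G.matchSum s x A W := by
  induction A using Finset.induction_on with
  | empty => intro W; simp [loopSum, matchSum, fluct, FitsIn, degF]
  | insert e A he ih =>
    intro W
    obtain ⟨⟨p⟩, hp⟩ := e
    have huv : p.1 ≠ p.2 := G.ne_of_adj hp
    rw [loopSum_insert s x he huv rfl W, matchSum_insert s x he rfl W, ih, ih]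

/-! ### The loop series as a loop sum -/

lemma loopTerm_eq (x : G.edgeSet → ℝ) (F : Finset G.edgeSet) :
    G.loopTerm x F = (∏ v : V, (1 - (G.degF F v : ℝ))) * ∏ e ∈ F, x e / (1 - x e) := by
  unfold loopTerm coveredF
  rw [← Finset.prod_const, ← Finset.prod_mul_distrib, Finset.prod_filter]
  congr 1
  refine Finset.prod_congr rfl fun v _ => ?_
  split_ifs with h
  · ring
  · have : G.degF F v = 0 := by omega
    simp [this]

lemma loopZ_eq_sum (x : G.edgeSet → ℝ) :
    G.loopZ x = ∑ F : Finset G.edgeSet, G.loopTerm x F := by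
  unfold loopZ
  rw [← Finset.add_sum_erase _ _ (Finset.mem_univ (∅ : Finset G.edgeSet))]
  congr 1
  simp [loopTerm, coveredF, degF]

/-- With `s_v = 1 - ∑_{e ∋ v} x_e` the fluctuation at `v` is `1 - d_F(v)`, so that the loop sum is
the loop series up to normalization. -/
lemma loopZ_mul (x : G.edgeSet → ℝ) (hx : ∀ e, 1 - x e ≠ 0) :
    G.loopZ x * ∏ e, (1 - x e) =
      G.loopSum (fun v => 1 - ∑ e ∈ G.incE v, x e) x Finset.univ Finset.univ := by
  rw [loopZ_eq_sum, Finset.sum_mul]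
  unfold loopSum
  rw [Finset.powerset_univ]
  refine Finset.sum_congr rfl fun F _ => ?_
  have h1 : ∀ v, G.fluct (fun v => 1 - ∑ e ∈ G.incE v, x e) x Finset.univ F v =
      1 - (G.degF F v : ℝ) := by
    intro v; unfold fluct incE; ring
  have h2 : (∏ e ∈ F, (1 - x e)) ≠ 0 := Finset.prod_ne_zero_iff.2 fun e _ => hx e
  rw [loopTerm_eq, Finset.prod_congr rfl fun v _ => h1 v, Finset.prod_div_distrib,
    ← Finset.prod_mul_prod_compl F (fun e => 1 - x e), ← Finset.compl_eq_univ_sdiff]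
  field_simp

/-! ### Consequences of the edge identity -/

/-- Double counting: multiplying `f` over the endpoints of the edges of `M` produces the exponents
`d_M(v)`. -/
lemma prod_endpoints (M : Finset G.edgeSet) (f : V → ℝ) :
    ∏ e ∈ M, ∏ v ∈ Finset.univ.filter (fun v => v ∈ (e.1 : Sym2 V)), f v =
      ∏ v, f v ^ G.degF M v := by
  rw [Finset.prod_comm' (t' := Finset.univ)
    (s' := fun v => M.filter (fun e => v ∈ (e.1 : Sym2 V)))]
  · simp [degF]
  · simp

lemma fitsIn_univ_iff (M : Finset G.edgeSet) :
    G.FitsIn Finset.univ M ↔ ∀ v, G.degF M v ≤ 1 := by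
  simp [FitsIn]

/-- Under `x_e (1 - x_e) = z s_u s_v` for every edge `e = uv`, each matching has the same weight in
`matchSum` as in the Gibbs measure, up to a common factor. -/
lemma weight_eq {z : ℝ} {s : V → ℝ} {x : G.edgeSet → ℝ}
    (hkey : ∀ e, x e * (1 - x e) =
      z * ∏ v ∈ Finset.univ.filter (fun v => v ∈ (e.1 : Sym2 V)), s v)
    {M : Finset G.edgeSet} (hM : ∀ v, G.degF M v ≤ 1) :
    (∏ e ∈ M, x e * (1 - x e)) * ∏ v, s v ^ (1 - G.degF M v) = z ^ M.card * ∏ v, s v := by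
  rw [Finset.prod_congr rfl fun e _ => hkey e, Finset.prod_mul_distrib, prod_endpoints,
    Finset.prod_const, mul_assoc, ← Finset.prod_mul_distrib]
  congr 1
  refine Finset.prod_congr rfl fun v _ => ?_
  rw [← pow_add, Nat.add_sub_cancel' (hM v), pow_one]

lemma isMatchingVec_iff (B : G.edgeSet → Bool) :
    G.IsMatchingVec B ↔ ∀ v, G.degF (Finset.univ.filter fun e => B e) v ≤ 1 := by
  simp [IsMatchingVec, degF, Finset.filter_filter]

lemma mWeight_eq (B : G.edgeSet → Bool) :
    G.mWeight B = (Finset.univ.filter fun e => B e).card := by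
  simp [mWeight]

lemma gibbsP_eq (z : ℝ) :
    G.gibbsP z = ∑ M : Finset G.edgeSet, if ∀ v, G.degF M v ≤ 1 then z ^ M.card else 0 := by
  unfold gibbsP
  refine Finset.sum_bij' (fun B _ => Finset.univ.filter fun e => B e)
    (fun M _ e => decide (e ∈ M)) (by simp) (by simp) (by simp) (by simp) ?_
  intro B _
  simp only [isMatchingVec_iff, mWeight_eq]

lemma gibbsP_pos {z : ℝ} (hz : 0 < z) : 0 < G.gibbsP z := by
  rw [gibbsP_eq]
  refine Finset.sum_pos' (fun M _ => ?_) ⟨∅, Finset.mem_univ _, by simp [degF]⟩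
  split_ifs <;> positivity

lemma matchSum_univ {z : ℝ} {s : V → ℝ} {x : G.edgeSet → ℝ}
    (hkey : ∀ e, x e * (1 - x e) =
      z * ∏ v ∈ Finset.univ.filter (fun v => v ∈ (e.1 : Sym2 V)), s v) :
    G.matchSum s x Finset.univ Finset.univ = (∏ v, s v) * G.gibbsP z := by
  unfold matchSum
  rw [gibbsP_eq, Finset.mul_sum, Finset.powerset_univ]
  refine Finset.sum_congr rfl fun M _ => ?_
  simp only [fitsIn_univ_iff]
  split_ifs with h
  · rw [mul_comm (∏ v, s v), ← weight_eq hkey h, Finset.prod_filter]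
    congr 1
    refine Finset.prod_congr rfl fun v _ => ?_
    have := h v
    split_ifs with h0
    · simp [h0]
    · have : G.degF M v = 1 := by omega
      simp [this]
  · simp

lemma card_endpoints (e : G.edgeSet) :
    (Finset.univ.filter (fun v => v ∈ (e.1 : Sym2 V))).card = 2 := by
  obtain ⟨⟨p⟩, hp⟩ := e
  have huv : p.1 ≠ p.2 := G.ne_of_adj hp
  have : Finset.univ.filter (fun v => v ∈ (s(p.1, p.2) : Sym2 V)) = {p.1, p.2} := by
    ext; simp
  exact (congrArg Finset.card this).trans (Finset.card_pair huv)

/-- The ratio of vertex and edge marginals is, up to a constant, the activity weight. -/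
lemma vertexMargProd_mul {z : ℝ} {x : G.edgeSet → ℝ}
    (hkey : ∀ e, x e * (1 - x e) =
      z * ∏ v ∈ Finset.univ.filter (fun v => v ∈ (e.1 : Sym2 V)), (1 - ∑ e ∈ G.incE v, x e))
    {B : G.edgeSet → Bool} (hB : G.IsMatchingVec B) :
    G.vertexMargProd x B * ∏ e, (1 - x e) =
      z ^ G.mWeight B * (∏ v, (1 - ∑ e ∈ G.incE v, x e)) * G.edgeMargProd x B := by
  rw [isMatchingVec_iff] at hB
  rw [mWeight_eq]
  set M := Finset.univ.filter fun e => B e = true with hMdef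
  rw [← weight_eq hkey hB]
  have hdeg : ∀ v, (∑ e ∈ G.incE v, if B e then 1 else 0) = G.degF M v := by
    intro v; simp [incE, degF, M, Finset.filter_filter, and_comm]
  have hend : ∏ v, ∏ e ∈ (G.incE v).filter (fun e => B e), x e = ∏ e ∈ M, x e ^ 2 := by
    rw [Finset.prod_comm' (t' := M)
      (s' := fun e => Finset.univ.filter (fun v => v ∈ (e.1 : Sym2 V)))]
    · simp [card_endpoints]
    · simp [incE, M]
  have hedge : G.edgeMargProd x B = (∏ e ∈ M, x e) * ∏ e ∈ Mᶜ, (1 - x e) := by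
    unfold edgeMargProd
    rw [Finset.prod_ite, ← hMdef]
    congr 2
    ext; simp [M]
  unfold vertexMargProd
  rw [Finset.prod_mul_distrib, hend, hedge, ← Finset.prod_mul_prod_compl M (fun e => 1 - x e),
    Finset.prod_congr rfl fun v _ => by rw [hdeg v], Finset.prod_pow, Finset.prod_mul_distrib]
  ring

/-! ### The Bethe free entropy -/

/-- Handshake: summing over vertices and incident edges counts every edge twice. -/
lemma sum_incE (f : G.edgeSet → ℝ) : ∑ v, ∑ e ∈ G.incE v, f e = 2 * ∑ e, f e := by
  rw [Finset.sum_comm' (t' := Finset.univ)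
    (s' := fun e => Finset.univ.filter (fun v => v ∈ (e.1 : Sym2 V))) (by simp [incE]),
    Finset.mul_sum]
  simp [card_endpoints]

lemma bethe_eq {z : ℝ} (hz : 0 < z) {x : G.edgeSet → ℝ} (hx0 : ∀ e, 0 < x e)
    (hx1 : ∀ e, 0 < 1 - x e) (hs : ∀ v, 0 < 1 - ∑ e ∈ G.incE v, x e)
    (hkey : ∀ e, x e * (1 - x e) =
      z * ∏ v ∈ Finset.univ.filter (fun v => v ∈ (e.1 : Sym2 V)), (1 - ∑ e ∈ G.incE v, x e)) :
    (∑ e : G.edgeSet, x e) * Real.log z + G.SBethe x =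
      ∑ e, Real.log (1 - x e) - ∑ v, Real.log (1 - ∑ e ∈ G.incE v, x e) := by
  have hlog : ∀ e, x e * Real.log (x e) + x e * Real.log (1 - x e) = x e * Real.log z +
      ∑ v ∈ Finset.univ.filter (fun v => v ∈ (e.1 : Sym2 V)),
        x e * Real.log (1 - ∑ e ∈ G.incE v, x e) := by
    intro e
    have := congrArg Real.log (hkey e)
    rw [Real.log_mul (hx0 e).ne' (hx1 e).ne',
      Real.log_mul hz.ne' (Finset.prod_ne_zero_iff.2 fun v _ => (hs v).ne'),
      Real.log_prod fun v _ => (hs v).ne'] at this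
    rw [← Finset.mul_sum]
    linear_combination x e * this
  have hsum := Finset.sum_congr (rfl : (Finset.univ : Finset G.edgeSet) = _) fun e _ => hlog e
  rw [Finset.sum_add_distrib, Finset.sum_add_distrib, ← Finset.sum_mul,
    Finset.sum_comm' (t' := Finset.univ) (s' := fun v => G.incE v) (by simp [incE])] at hsum
  simp only [← Finset.sum_mul] at hsum
  have hvert : ∑ v, 2 * (1 - ∑ e ∈ G.incE v, x e) * Real.log (1 - ∑ e ∈ G.incE v, x e) =
      2 * ∑ v, Real.log (1 - ∑ e ∈ G.incE v, x e) -
      2 * ∑ v, (∑ e ∈ G.incE v, x e) * Real.log (1 - ∑ e ∈ G.incE v, x e) := by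
    rw [Finset.mul_sum, Finset.mul_sum, ← Finset.sum_sub_distrib]
    exact Finset.sum_congr rfl fun v _ => by ring
  have hent : ∑ e, (-(x e * Real.log (x e)) + (1 - x e) * Real.log (1 - x e)) =
      ∑ e, Real.log (1 - x e) -
        (∑ e, x e * Real.log (x e) + ∑ e, x e * Real.log (1 - x e)) := by
    rw [← Finset.sum_add_distrib, ← Finset.sum_sub_distrib]
    exact Finset.sum_congr rfl fun v _ => by ring
  unfold SBethe
  rw [Finset.sum_sub_distrib, sum_incE, hvert, hent, hsum]
  ring

/-! ### The belief propagation fixed point -/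

/-- The incident edges of `v` are the edges to its neighbours. -/
lemma sum_incE_eq_neighbor (v : V) (f : G.edgeSet → ℝ) :
    ∑ e ∈ G.incE v, f e = ∑ w ∈ (G.neighborFinset v).attach,
      f ⟨s(v, w.1), G.mem_edgeSet.mpr ((mem_neighborFinset _ _ _).mp w.2)⟩ := by
  symm
  refine Finset.sum_bij
    (fun w _ => ⟨s(v, w.1), G.mem_edgeSet.mpr ((mem_neighborFinset _ _ _).mp w.2)⟩)
    ?_ ?_ ?_ ?_
  · intro w _; simp [incE]
  · intro w₁ _ w₂ _ h
    have h' : s(v, w₁.1) = s(v, w₂.1) := congrArg Subtype.val h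
    exact Subtype.ext (Sym2.congr_right.1 h')
  · rintro ⟨e, he⟩ hv
    have hv' : v ∈ e := by simpa [incE] using hv
    obtain ⟨w, rfl⟩ := Sym2.mem_iff_exists.1 hv'
    exact ⟨⟨w, (mem_neighborFinset _ _ _).2 (G.mem_edgeSet.1 he)⟩, Finset.mem_attach _ _, rfl⟩
  · intro w _; rfl

lemma inFlow_eq (Y : G.DEdge → ℝ) {u v : V} (h : G.Adj u v) :
    G.inFlow Y u = Y ⟨(v, u), h.symm⟩ + G.exclSum Y u v := by
  -- Extending the messages by zero turns both sums over attached sets into ordinary ones.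
  let f : V → ℝ := fun w => if hw : G.Adj w u then Y ⟨(w, u), hw⟩ else 0
  have h1 : G.inFlow Y u = ∑ w ∈ G.neighborFinset u, f w := by
    unfold inFlow
    rw [← Finset.sum_attach _ f]
    refine Finset.sum_congr rfl fun w _ => ?_
    have : G.Adj w.1 u := ((mem_neighborFinset _ _ _).mp w.2).symm
    simp [f, this]
  have h2 : G.exclSum Y u v = ∑ w ∈ (G.neighborFinset u).erase v, f w := by
    unfold exclSum
    rw [← Finset.sum_attach _ f]
    refine Finset.sum_congr rfl fun w _ => ?_
    have : G.Adj w.1 u := ((mem_neighborFinset _ _ _).mp (Finset.mem_of_mem_erase w.2)).symm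
    simp [f, this]
  have h3 : f v = Y ⟨(v, u), h.symm⟩ := by simp [f, h.symm]
  rw [h1, h2, ← h3, Finset.add_sum_erase _ _ ((mem_neighborFinset _ _ _).2 h)]

lemma exclSum_nonneg {Y : G.DEdge → ℝ} (hY : ∀ e, 0 < Y e) (u v : V) : 0 ≤ G.exclSum Y u v :=
  Finset.sum_nonneg fun _ _ => (hY _).le

lemma inFlow_nonneg {Y : G.DEdge → ℝ} (hY : ∀ e, 0 < Y e) (u : V) : 0 ≤ G.inFlow Y u :=
  Finset.sum_nonneg fun _ _ => (hY _).le

/-- The fixed-point equation at `u → v` with the missing message `v → u` put back into the sum. -/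
lemma bp_vertex {z : ℝ} {Y : G.DEdge → ℝ} (hY : G.IsBPFixed z Y) {u v : V} (h : G.Adj u v) :
    z + Y ⟨(u, v), h⟩ * Y ⟨(v, u), h.symm⟩ = Y ⟨(u, v), h⟩ * (1 + G.inFlow Y u) := by
  have h1 := hY.2 ⟨(u, v), h⟩
  have h2 : 0 < 1 + G.exclSum Y u v := by linarith [exclSum_nonneg hY.1 u v]
  have h3 : Y ⟨(u, v), h⟩ * (1 + G.exclSum Y u v) = z := by
    rw [h1, bpR]; field_simp
  rw [inFlow_eq Y h]
  linear_combination -h3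

/-- The BP estimate of the probability that `v` is uncovered is `1 / (1 + ∑_{w ∈ ∂v} Y_{w → v})`. -/
lemma vertex_marginal {z : ℝ} {Y : G.DEdge → ℝ} (hY : G.IsBPFixed z Y)
    {x : G.edgeSet → ℝ}
    (hx : ∀ u v (h : G.Adj u v), x ⟨s(u, v), G.mem_edgeSet.mpr h⟩ =
      Y ⟨(u, v), h⟩ * Y ⟨(v, u), h.symm⟩ / (z + Y ⟨(u, v), h⟩ * Y ⟨(v, u), h.symm⟩)) (v : V) :
    1 - ∑ e ∈ G.incE v, x e = 1 / (1 + G.inFlow Y v) := by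
  have hT : 0 < 1 + G.inFlow Y v := by linarith [inFlow_nonneg hY.1 v]
  have : ∑ e ∈ G.incE v, x e = G.inFlow Y v / (1 + G.inFlow Y v) := by
    conv_rhs => rw [inFlow, Finset.sum_div]
    rw [sum_incE_eq_neighbor]
    refine Finset.sum_congr rfl fun w _ => ?_
    have hadj : G.Adj v w.1 := (mem_neighborFinset _ _ _).mp w.2
    have hpos := hY.1 ⟨(v, w.1), hadj⟩
    rw [hx v w.1 hadj, bp_vertex hY hadj, mul_div_mul_left _ _ hpos.ne']
    rfl
  rw [this]; field_simp; ring

/-- At a BP fixed point `x_e (1 - x_e) = z s_u s_v` for every edge `e = uv`, where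
`s_v = 1 - ∑_{e ∋ v} x_e`. -/
lemma edge_identity {z : ℝ} (hz : 0 < z) {Y : G.DEdge → ℝ} (hY : G.IsBPFixed z Y)
    {x : G.edgeSet → ℝ}
    (hx : ∀ u v (h : G.Adj u v), x ⟨s(u, v), G.mem_edgeSet.mpr h⟩ =
      Y ⟨(u, v), h⟩ * Y ⟨(v, u), h.symm⟩ / (z + Y ⟨(u, v), h⟩ * Y ⟨(v, u), h.symm⟩))
    (e : G.edgeSet) :
    x e * (1 - x e) = z *
      ∏ v ∈ Finset.univ.filter (fun v => v ∈ (e.1 : Sym2 V)), (1 - ∑ e ∈ G.incE v, x e) := by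
  obtain ⟨e, he⟩ := e
  induction e using Sym2.ind with
  | _ u v =>
    have h : G.Adj u v := he
    have hset : Finset.univ.filter (fun w => w ∈ s(u, v)) = {u, v} := by ext; simp
    have hTu : 0 < 1 + G.inFlow Y u := by linarith [inFlow_nonneg hY.1 u]
    have hTv : 0 < 1 + G.inFlow Y v := by linarith [inFlow_nonneg hY.1 v]
    have h1 := bp_vertex hY h
    have h2 := bp_vertex hY h.symm
    have ha := hY.1 ⟨(u, v), h⟩
    have hb := hY.1 ⟨(v, u), h.symm⟩
    have hx' := hx u v h
    simp only [hset]
    rw [Finset.prod_pair h.ne, vertex_marginal hY hx, vertex_marginal hY hx, hx']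
    generalize Y ⟨(u, v), h⟩ = a at *
    generalize Y ⟨(v, u), h.symm⟩ = b at *
    generalize 1 + G.inFlow Y u = T at *
    generalize 1 + G.inFlow Y v = S at *
    have hD : 0 < z + a * b := by positivity
    have hprod : (z + a * b) ^ 2 = a * b * (T * S) := by
      rw [mul_comm b a] at h2
      calc (z + a * b) ^ 2 = (z + a * b) * (z + a * b) := sq _
        _ = (a * T) * (b * S) := by nth_rewrite 1 [h1]; rw [h2]
        _ = _ := by ring
    have : 1 - a * b / (z + a * b) = z / (z + a * b) := by field_simp; ring
    rw [this, div_mul_div_comm, ← sq, hprod]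
    field_simp

end SimpleGraph

/-- Loop series expansion: `μ_G^z(B) = (1/Z) Π_v μ_{∂v}(B_{∂v}) / Π_e μ_e(B_e)` with `Z` the
loop series; only generalized loops contribute, and `ln Z = Φ_G(z) − Φ^B(x(z); z)`. -/
theorem labp_loop_series (G : SimpleGraph V) [DecidableRel G.Adj]
    (z : ℝ) (hz : 0 < z) (Y : G.DEdge → ℝ) (hY : G.IsBPFixed z Y)
    (x : G.edgeSet → ℝ)
    (hx : ∀ u v (h : G.Adj u v), x ⟨s(u, v), G.mem_edgeSet.mpr h⟩ =
      Y ⟨(u, v), h⟩ * Y ⟨(v, u), h.symm⟩ / (z + Y ⟨(u, v), h⟩ * Y ⟨(v, u), h.symm⟩)) :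
    (∀ B : G.edgeSet → Bool, G.IsMatchingVec B →
      z ^ G.mWeight B / G.gibbsP z =
        (1 / G.loopZ x) * (G.vertexMargProd x B / G.edgeMargProd x B)) ∧
    (∀ F : Finset G.edgeSet, F ≠ ∅ → (∃ v, G.degF F v = 1) → G.loopTerm x F = 0) ∧
    Real.log (G.loopZ x) =
      Real.log (G.gibbsP z) -
        ((∑ e : G.edgeSet, x e) * Real.log z + G.SBethe x) := by
  have hs : ∀ v, 0 < 1 - ∑ e ∈ G.incE v, x e := fun v => by
    rw [SimpleGraph.vertex_marginal hY hx]
    have := SimpleGraph.inFlow_nonneg hY.1 v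
    positivity
  have hx01 : ∀ e, 0 < x e ∧ 0 < 1 - x e := by
    rintro ⟨e, he⟩
    induction e using Sym2.ind with
    | _ u v =>
      have ha := hY.1 ⟨(u, v), he⟩
      have hb := hY.1 ⟨(v, u), G.adj_symm he⟩
      rw [hx u v he]
      refine ⟨by positivity, ?_⟩
      rw [sub_pos, div_lt_one (by positivity)]
      linarith
  have hkey := SimpleGraph.edge_identity hz hY hx
  have hP := SimpleGraph.gibbsP_pos (G := G) hz
  have hE : 0 < ∏ e, (1 - x e) := Finset.prod_pos fun e _ => (hx01 e).2
  have hS : 0 < ∏ v, (1 - ∑ e ∈ G.incE v, x e) := Finset.prod_pos fun v _ => hs v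
  have hZ : G.loopZ x * ∏ e, (1 - x e) = (∏ v, (1 - ∑ e ∈ G.incE v, x e)) * G.gibbsP z := by
    rw [SimpleGraph.loopZ_mul x fun e => (hx01 e).2.ne', SimpleGraph.loopSum_eq_matchSum,
      SimpleGraph.matchSum_univ hkey]
  have hZpos : 0 < G.loopZ x := pos_of_mul_pos_left (hZ ▸ mul_pos hS hP) hE.le
  refine ⟨fun B hB => ?_, fun F _ ⟨v, hv⟩ => ?_, ?_⟩
  · have hV := SimpleGraph.vertexMargProd_mul hkey hB
    have hD : 0 < G.edgeMargProd x B := Finset.prod_pos fun e _ => by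
      split_ifs
      exacts [(hx01 e).1, (hx01 e).2]
    rw [div_mul_div_comm, one_mul, div_eq_div_iff hP.ne' (by positivity)]
    refine mul_right_cancel₀ hE.ne' ?_
    linear_combination (z ^ G.mWeight B * G.edgeMargProd x B) * hZ - G.gibbsP z * hV
  · rw [SimpleGraph.loopTerm_eq, Finset.prod_eq_zero (Finset.mem_univ v) (by simp [hv]), zero_mul]
  · rw [SimpleGraph.bethe_eq hz (fun e => (hx01 e).1) (fun e => (hx01 e).2) hs hkey]
    have hlog := congrArg Real.log hZ
    rw [Real.log_mul hZpos.ne' hE.ne', Real.log_mul hS.ne' hP.ne',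
      Real.log_prod fun e _ => (hx01 e).2.ne', Real.log_prod fun v _ => (hs v).ne'] at hlog
    linarith
end
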